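/- arXiv:1911.01706 — 4 statements merged into one kernel-verified Lean document; each statement's English description precedes it below -/
import Mathlib

section
/- Let $w_t \ge 1$ and $t_f > 0$, and define the weight $w(t) = \frac{w_t - 1}{1+t} + 1 = \frac{w_t + t}{1+t}$ for $t \in [0, t_f]$. Suppose $x^* : \mathbb{R} \to \mathbb{R}$ is three times continuously differentiable on $[0, t_f]$ and there exist real constants $c_1, c_2, c_3$ such that $w(t) \cdot x^{*'''}(t) = \tfrac{1}{2} c_1 t^2 - c_2 t + c_3$ for all $t \in [0, t_f]$. Then for every three times continuously differentiable function $x : \mathbb{R} \to \mathbb{R}$ satisfying $x(0) = x^*(0)$, $x'(0) = x^{*'}(0)$, $x''(0) = x^{*''}(0)$, $x(t_f) = x^*(t_f)$, $x'(t_f) = x^{*'}(t_f)$, and $x''(t_f) = x^{*''}(t_f)$, one has $\int_0^{t_f} \tfrac{1}{2} w(t) \, (x^{*'''}(t))^2 \, dt \le \int_0^{t_f} \tfrac{1}{2} w(t) \, (x'''(t))^2 \, dt$. -/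
/-!
Write `q t = (1 / 2) * c1 * t ^ 2 - c2 * t + c3` for the weighted jerk of `xs`, and `d = x - xs`.
Since the weight is positive, the integrand is convex in the jerk, so pointwise
`(1 / 2) * w * x''' ^ 2 ≥ (1 / 2) * w * xs''' ^ 2 + q * d'''`, the gap being
`(1 / 2) * w * d''' ^ 2`. As `q''' = 0`, the function `q * d'''` has the explicit primitive
`q * d'' - q' * d' + q'' * d` (three integrations by parts), which vanishes at both endpoints
because `d`, `d'`, `d''` do. Hence the first-order term integrates to zero
(`integral_quadratic_mul_jerk_sub`), and integrating the pointwise inequality gives the claim.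
-/

theorem hasDerivAt_iteratedDeriv_of_contDiff_three {f : ℝ → ℝ} (hf : ContDiff ℝ 3 f)
    {k : ℕ} (hk : k < 3) (t : ℝ) :
    HasDerivAt (iteratedDeriv k f) (iteratedDeriv (k + 1) f t) t := by
  rw [iteratedDeriv_succ]
  exact (hf.differentiable_iteratedDeriv k (by exact_mod_cast hk) t).hasDerivAt

/-- Stationarity: quadratic polynomials are orthogonal to the jerk of any trajectory whose
position, velocity and acceleration vanish at both endpoints (here the difference `x - xs`). -/
theorem integral_quadratic_mul_jerk_sub {tf c1 c2 c3 : ℝ} {xs x : ℝ → ℝ}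
    (hxs : ContDiff ℝ 3 xs) (hx : ContDiff ℝ 3 x)
    (h0 : x 0 = xs 0) (h0' : deriv x 0 = deriv xs 0)
    (h0'' : iteratedDeriv 2 x 0 = iteratedDeriv 2 xs 0)
    (hf : x tf = xs tf) (hf' : deriv x tf = deriv xs tf)
    (hf'' : iteratedDeriv 2 x tf = iteratedDeriv 2 xs tf) :
    ∫ t in (0 : ℝ)..tf, ((1 / 2) * c1 * t ^ 2 - c2 * t + c3) *
      (iteratedDeriv 3 x t - iteratedDeriv 3 xs t) = 0 := by
  have hcx : Continuous (iteratedDeriv 3 x) := hx.continuous_iteratedDeriv 3 le_rfl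
  have hcs : Continuous (iteratedDeriv 3 xs) := hxs.continuous_iteratedDeriv 3 le_rfl
  have key : ∀ t ∈ Set.uIcc (0 : ℝ) tf, HasDerivAt
      (fun t => ((1 / 2) * c1 * t ^ 2 - c2 * t + c3) * (iteratedDeriv 2 x t - iteratedDeriv 2 xs t)
        - (c1 * t - c2) * (iteratedDeriv 1 x t - iteratedDeriv 1 xs t)
        + c1 * (iteratedDeriv 0 x t - iteratedDeriv 0 xs t))
      (((1 / 2) * c1 * t ^ 2 - c2 * t + c3) *
        (iteratedDeriv 3 x t - iteratedDeriv 3 xs t)) t := by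
    intro t _
    have hd : ∀ k < 3, HasDerivAt (fun t => iteratedDeriv k x t - iteratedDeriv k xs t)
        (iteratedDeriv (k + 1) x t - iteratedDeriv (k + 1) xs t) t := fun k hk =>
      (hasDerivAt_iteratedDeriv_of_contDiff_three hx hk t).sub
        (hasDerivAt_iteratedDeriv_of_contDiff_three hxs hk t)
    have hl : HasDerivAt (fun t : ℝ => c1 * t - c2) c1 t := by
      simpa using ((hasDerivAt_id t).const_mul c1).sub_const c2
    have hq : HasDerivAt (fun t : ℝ => (1 / 2) * c1 * t ^ 2 - c2 * t + c3) (c1 * t - c2) t := by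
      refine ((((hasDerivAt_pow 2 t).const_mul ((1 / 2) * c1)).sub
        ((hasDerivAt_id t).const_mul c2)).add_const c3).congr_deriv ?_
      norm_num
      ring
    refine (((hq.mul (hd 2 (by norm_num))).sub (hl.mul (hd 1 (by norm_num)))).add
      ((hd 0 (by norm_num)).const_mul c1)).congr_deriv ?_
    norm_num
    ring
  rw [intervalIntegral.integral_eq_sub_of_hasDerivAt key
    (Continuous.intervalIntegrable (by fun_prop) _ _)]
  simp [h0, h0', h0'', hf, hf', hf'', iteratedDeriv_zero, iteratedDeriv_one]


/-- Optimality of the time-weighted jerk optimal trajectory (paper's Theorem 1):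
if the weighted jerk `w t * x*'''(t)` of `x*` is a quadratic polynomial on `[0, t_f]`,
then `x*` minimizes the time-weighted jerk cost among all three times continuously
differentiable trajectories with the same boundary position, velocity, and acceleration. -/
theorem time_weighted_jerk_optimality
    (wt tf : ℝ) (hwt : 1 ≤ wt) (htf : 0 < tf)
    (w : ℝ → ℝ) (hw : ∀ t, w t = (wt - 1) / (1 + t) + 1)
    (xs : ℝ → ℝ) (hxs : ContDiff ℝ 3 xs)
    (c1 c2 c3 : ℝ)
    (hquad : ∀ t ∈ Set.Icc (0 : ℝ) tf,
      w t * iteratedDeriv 3 xs t = (1 / 2) * c1 * t ^ 2 - c2 * t + c3)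
    (x : ℝ → ℝ) (hx : ContDiff ℝ 3 x)
    (h0 : x 0 = xs 0) (h0' : deriv x 0 = deriv xs 0)
    (h0'' : iteratedDeriv 2 x 0 = iteratedDeriv 2 xs 0)
    (hf : x tf = xs tf) (hf' : deriv x tf = deriv xs tf)
    (hf'' : iteratedDeriv 2 x tf = iteratedDeriv 2 xs tf) :
    ∫ t in (0 : ℝ)..tf, (1 / 2) * w t * (iteratedDeriv 3 xs t) ^ 2 ≤
      ∫ t in (0 : ℝ)..tf, (1 / 2) * w t * (iteratedDeriv 3 x t) ^ 2 := by
  have hcx : Continuous (iteratedDeriv 3 x) := hx.continuous_iteratedDeriv 3 le_rfl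
  have hcs : Continuous (iteratedDeriv 3 xs) := hxs.continuous_iteratedDeriv 3 le_rfl
  have hpos : ∀ t ∈ Set.Icc (0 : ℝ) tf, 0 ≤ w t := by
    intro t ht
    have h1 : 0 < 1 + t := by linarith [ht.1]
    have h2 : 0 ≤ wt - 1 := by linarith
    rw [hw]
    positivity
  have hwc : ContinuousOn w (Set.uIcc 0 tf) := by
    rw [Set.uIcc_of_le htf.le, funext hw]
    refine ContinuousOn.add (ContinuousOn.div (by fun_prop) (by fun_prop) ?_) (by fun_prop)
    intro t ht
    linarith [ht.1]
  have hint : ∀ f : ℝ → ℝ, Continuous f → IntervalIntegrable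
      (fun t => (1 / 2) * w t * (f t) ^ 2) MeasureTheory.volume 0 tf := fun f hfc =>
    ((continuousOn_const.mul hwc).mul (hfc.pow 2).continuousOn).intervalIntegrable
  have hqi : IntervalIntegrable (fun t => ((1 / 2) * c1 * t ^ 2 - c2 * t + c3) *
      (iteratedDeriv 3 x t - iteratedDeriv 3 xs t)) MeasureTheory.volume 0 tf :=
    Continuous.intervalIntegrable (by fun_prop) _ _
  have hzero := integral_quadratic_mul_jerk_sub (c1 := c1) (c2 := c2) (c3 := c3)
    hxs hx h0 h0' h0'' hf hf' hf''
  have hadd := intervalIntegral.integral_add (hint _ hcs) hqi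
  rw [hzero, add_zero] at hadd
  rw [← hadd]
  refine intervalIntegral.integral_mono_on htf.le ((hint _ hcs).add hqi) (hint _ hcx) ?_
  intro t ht
  rw [← hquad t ht]
  -- The difference between the two sides is `(1 / 2) * w t * (x''' t - xs''' t) ^ 2`.
  nlinarith [mul_nonneg (hpos t ht) (sq_nonneg (iteratedDeriv 3 x t - iteratedDeriv 3 xs t))]
end

section
/- Let $w_t \ge 1$ and $t_f > 0$, and define the weight $w(t) = \frac{w_t - 1}{1+t} + 1 = \frac{w_t + t}{1+t}$ for $t \in [0, t_f]$. Suppose $x^* : \mathbb{R} \to \mathbb{R}$ is three times continuously differentiable on $[0, t_f]$ with $w(t) \cdot x^{*'''}(t) = \tfrac{1}{2} c_1 t^2 - c_2 t + c_3$ on $[0, t_f]$ for some reals $c_1, c_2, c_3$. If $x : \mathbb{R} \to \mathbb{R}$ is three times continuously differentiable on $[0,t_f]$, satisfies the same boundary conditions as $x^*$ for position, velocity, and acceleration at $t = 0$ and $t = t_f$, and $x'''(t_0) \ne x^{*'''}(t_0)$ for some $t_0 \in [0, t_f]$, then $\int_0^{t_f} \tfrac{1}{2} w(t) (x^{*'''}(t))^2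 dt < \int_0^{t_f} \tfrac{1}{2} w(t) (x'''(t))^2 dt$ (strict inequality). -/
/-!
Write `d = x - xs` and `q t = c1 t² / 2 - c2 t + c3`, so that `w xs''' = q` on `[0, tf]`.
Expanding the square gives, on `[0, tf]`,
`w x'''² / 2 = w xs'''² / 2 + q d''' + w d'''² / 2`.
The cross term is the derivative of `q d'' - q' d' + q'' d` because `q''' = 0`
(`hasDerivAt_quadratic_mul`), so its integral vanishes by the boundary conditions. The last term
is continuous, nonnegative, and positive at `t0`, so its integral is positive.
-/

theorem hasDerivAt_chain_of_contDiff {y : ℝ → ℝ} (hy : ContDiff ℝ 3 y) (t : ℝ) :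
    HasDerivAt y (deriv y t) t ∧ HasDerivAt (deriv y) (iteratedDeriv 2 y t) t ∧
      HasDerivAt (iteratedDeriv 2 y) (iteratedDeriv 3 y t) t := by
  have h (m : ℕ) (hm : (m : WithTop ℕ∞) < 3) :
      HasDerivAt (iteratedDeriv m y) (iteratedDeriv (m + 1) y t) t := by
    rw [iteratedDeriv_succ]
    exact (hy.differentiable_iteratedDeriv m hm t).hasDerivAt
  refine ⟨?_, ?_, h 2 (by norm_num)⟩
  · simpa using h 0 (by norm_num)
  · simpa using h 1 (by norm_num)

/-- The antiderivative obtained by integrating `q y'''` by parts three times, for a quadratic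
polynomial `q`. -/
theorem hasDerivAt_quadratic_mul {y : ℝ → ℝ} (hy : ContDiff ℝ 3 y) (c1 c2 c3 t : ℝ) :
    HasDerivAt
      (fun t => ((1 / 2) * c1 * t ^ 2 - c2 * t + c3) * iteratedDeriv 2 y t
        - (c1 * t - c2) * deriv y t + c1 * y t)
      (((1 / 2) * c1 * t ^ 2 - c2 * t + c3) * iteratedDeriv 3 y t) t := by
  obtain ⟨h1, h2, h3⟩ := hasDerivAt_chain_of_contDiff hy t
  have hl : HasDerivAt (fun t : ℝ => c1 * t - c2) c1 t := by
    simpa using ((hasDerivAt_id t).const_mul c1).sub_const c2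
  have hq : HasDerivAt (fun t : ℝ => (1 / 2) * c1 * t ^ 2 - c2 * t + c3) (c1 * t - c2) t := by
    have := ((((hasDerivAt_id t).pow 2).const_mul ((1 / 2) * c1)).sub
      ((hasDerivAt_id t).const_mul c2)).add_const c3
    refine this.congr_deriv ?_
    simp
    ring
  refine (((hq.mul h3).sub (hl.mul h2)).add (h1.const_mul c1)).congr_deriv ?_
  ring


/-- Strict optimality of the time-weighted jerk optimal trajectory (paper's Theorem 1):
if the weighted jerk of `x*` is a quadratic polynomial on `[0, t_f]` and `x` is an
admissible trajectory whose jerk differs from that of `x*` at some point of `[0, t_f]`,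
then `x` has strictly larger time-weighted jerk cost. -/
theorem time_weighted_jerk_strict_optimality
    (wt tf : ℝ) (hwt : 1 ≤ wt) (htf : 0 < tf)
    (w : ℝ → ℝ) (hw : ∀ t, w t = (wt - 1) / (1 + t) + 1)
    (xs : ℝ → ℝ) (hxs : ContDiff ℝ 3 xs)
    (c1 c2 c3 : ℝ)
    (hquad : ∀ t ∈ Set.Icc (0 : ℝ) tf,
      w t * iteratedDeriv 3 xs t = (1 / 2) * c1 * t ^ 2 - c2 * t + c3)
    (x : ℝ → ℝ) (hx : ContDiff ℝ 3 x)
    (h0 : x 0 = xs 0) (h0' : deriv x 0 = deriv xs 0)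
    (h0'' : iteratedDeriv 2 x 0 = iteratedDeriv 2 xs 0)
    (hf : x tf = xs tf) (hf' : deriv x tf = deriv xs tf)
    (hf'' : iteratedDeriv 2 x tf = iteratedDeriv 2 xs tf)
    (t0 : ℝ) (ht0 : t0 ∈ Set.Icc (0 : ℝ) tf)
    (hne : iteratedDeriv 3 x t0 ≠ iteratedDeriv 3 xs t0) :
    ∫ t in (0 : ℝ)..tf, (1 / 2) * w t * (iteratedDeriv 3 xs t) ^ 2 <
      ∫ t in (0 : ℝ)..tf, (1 / 2) * w t * (iteratedDeriv 3 x t) ^ 2 := by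
  have hj : Continuous (iteratedDeriv 3 x) := hx.continuous_iteratedDeriv 3 le_rfl
  have hjs : Continuous (iteratedDeriv 3 xs) := hxs.continuous_iteratedDeriv 3 le_rfl
  have hwpos : ∀ t ∈ Set.Icc (0 : ℝ) tf, 0 < w t := by
    intro t ht
    have h1 : 0 < 1 + t := by linarith [ht.1]
    have h2 : 0 ≤ (wt - 1) / (1 + t) := div_nonneg (by linarith) h1.le
    rw [hw]
    linarith
  have hwc : ContinuousOn w (Set.Icc 0 tf) := by
    rw [funext hw]
    refine (continuousOn_const.div (by fun_prop) ?_).add continuousOn_const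
    intro t ht
    linarith [ht.1]
  have hcost (f : ℝ → ℝ) (hf : Continuous f) :
      ContinuousOn (fun t => (1 / 2) * w t * f t ^ 2) (Set.Icc 0 tf) :=
    (continuousOn_const.mul hwc).mul (hf.pow 2).continuousOn
  have hint (f : ℝ → ℝ) (hf : Continuous f) :
      IntervalIntegrable (fun t => (1 / 2) * w t * f t ^ 2) MeasureTheory.volume 0 tf :=
    (hcost f hf).intervalIntegrable_of_Icc htf.le
  have hd : Continuous (fun t => iteratedDeriv 3 x t - iteratedDeriv 3 xs t) := hj.sub hjs
  have hpos : 0 < ∫ t in (0 : ℝ)..tf,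
      (1 / 2) * w t * (iteratedDeriv 3 x t - iteratedDeriv 3 xs t) ^ 2 := by
    refine intervalIntegral.integral_pos htf (hcost _ hd) ?_ ⟨t0, ht0, ?_⟩
    · intro t ht
      have := hwpos t (Set.Ioc_subset_Icc_self ht)
      positivity
    · have h1 := hwpos t0 ht0
      have h2 := sub_ne_zero.mpr hne
      positivity
  have hcint : IntervalIntegrable (fun t => ((1 / 2) * c1 * t ^ 2 - c2 * t + c3)
      * iteratedDeriv 3 x t - ((1 / 2) * c1 * t ^ 2 - c2 * t + c3) * iteratedDeriv 3 xs t)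
      MeasureTheory.volume 0 tf :=
    Continuous.intervalIntegrable (by fun_prop) 0 tf
  have hcross : ∫ t in (0 : ℝ)..tf, (((1 / 2) * c1 * t ^ 2 - c2 * t + c3) * iteratedDeriv 3 x t
      - ((1 / 2) * c1 * t ^ 2 - c2 * t + c3) * iteratedDeriv 3 xs t) = 0 := by
    rw [intervalIntegral.integral_eq_sub_of_hasDerivAt (fun t _ =>
      (hasDerivAt_quadratic_mul hx c1 c2 c3 t).sub (hasDerivAt_quadratic_mul hxs c1 c2 c3 t)) hcint]
    simp only [Pi.sub_apply, h0, h0', h0'', hf, hf', hf'', sub_self]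
  have hsplit : ∫ t in (0 : ℝ)..tf, (1 / 2) * w t * (iteratedDeriv 3 x t) ^ 2 =
      ∫ t in (0 : ℝ)..tf, ((1 / 2) * w t * (iteratedDeriv 3 xs t) ^ 2
        + (((1 / 2) * c1 * t ^ 2 - c2 * t + c3) * iteratedDeriv 3 x t
          - ((1 / 2) * c1 * t ^ 2 - c2 * t + c3) * iteratedDeriv 3 xs t)
        + (1 / 2) * w t * (iteratedDeriv 3 x t - iteratedDeriv 3 xs t) ^ 2) := by
    refine intervalIntegral.integral_congr fun t ht => ?_
    rw [Set.uIcc_of_le htf.le] at ht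
    simp only [← hquad t ht]
    ring
  rw [hsplit, intervalIntegral.integral_add ((hint _ hjs).add hcint) (hint _ hd),
    intervalIntegral.integral_add (hint _ hjs) hcint, hcross]
  linarith
end

section
/- Let $w_t \ge 1$, $t_f > 0$, and define the weight $w(t) = \frac{w_t - 1}{1+t} + 1 = \frac{w_t + t}{1+t}$. Suppose $x^* : \mathbb{R} \to \mathbb{R}$ is three times continuously differentiable on $[0, t_f]$ and minimizes $\tilde{J}(x) = \int_0^{t_f} \tfrac{1}{2} w(t) (x'''(t))^2 dt$ over all three times continuously differentiable functions $x$ on $[0,t_f]$ with $x(0) = x^*(0)$, $x'(0) = x^{*'}(0)$, $x''(0) = x^{*''}(0)$, $x(t_f) = x^*(t_f)$, $x'(t_f) = x^{*'}(t_f)$, and $x''(t_f) = x^{*''}(t_f)$. Then there exist real constants $c_1, c_2, c_3$ such that $w(t) \cdot x^{*'''}(t) = \tfrac{1}{2} c_1 t^2 - c_2 t + c_3$ for all $t \in [0, t_f]$; equivalently $x^{*'''}(t) = -\frac{1+t}{w_t + t} \lambda_3(t)$ with $\lambda_3(t) = -(\tfrac{1}{2} c_1 t^2 - c_2 t + c_3)$.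 -/
/-!
The argument is the du Bois-Reymond lemma for third derivatives. Write `G = w · xs'''`. There is a
quadratic `q` such that the threefold primitive `η` of `h = G - q` starting from zero at `0`
also vanishes to second order at `tf` (`exists_variation`; matching the three end conditions is an
invertible linear system in the coefficients of `q`). The competitors `xs + ε η` are then
admissible, so the first variation `∫ w · xs''' · η''' = ∫ G h` vanishes. Integrating by parts
three times, `∫ q h = ∫ q η''' = 0` (`integral_quadratic_mul_eq_zero`). Hence `∫ h ^ 2 = 0`, and
`h` vanishes on `[0, tf]` by continuity.
-/

/-- `f₁, f₂, f₃` are the successive derivatives of `f₀`, with `f₃` continuous. -/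
structure DerivChain (f₀ f₁ f₂ f₃ : ℝ → ℝ) : Prop where
  d0 : ∀ t, HasDerivAt f₀ (f₁ t) t
  d1 : ∀ t, HasDerivAt f₁ (f₂ t) t
  d2 : ∀ t, HasDerivAt f₂ (f₃ t) t
  cont : Continuous f₃

namespace DerivChain

variable {f₀ f₁ f₂ f₃ g₀ g₁ g₂ g₃ : ℝ → ℝ}

theorem deriv_eq (H : DerivChain f₀ f₁ f₂ f₃) : deriv f₀ = f₁ :=
  funext fun t => (H.d0 t).deriv

theorem iteratedDeriv_two (H : DerivChain f₀ f₁ f₂ f₃) : iteratedDeriv 2 f₀ = f₂ := by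
  rw [iteratedDeriv_succ, iteratedDeriv_one, H.deriv_eq]
  exact funext fun t => (H.d1 t).deriv

theorem iteratedDeriv_three (H : DerivChain f₀ f₁ f₂ f₃) : iteratedDeriv 3 f₀ = f₃ := by
  rw [iteratedDeriv_succ, H.iteratedDeriv_two]
  exact funext fun t => (H.d2 t).deriv

theorem contDiff (H : DerivChain f₀ f₁ f₂ f₃) : ContDiff ℝ 3 f₀ := by
  have e1 : deriv f₁ = f₂ := funext fun t => (H.d1 t).deriv
  have e2 : deriv f₂ = f₃ := funext fun t => (H.d2 t).deriv
  have c2 : ContDiff ℝ 1 f₂ :=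
    contDiff_one_iff_deriv.2 ⟨fun t => (H.d2 t).differentiableAt, e2 ▸ H.cont⟩
  have c1 : ContDiff ℝ (1 + 1) f₁ :=
    contDiff_succ_iff_deriv.2 ⟨fun t => (H.d1 t).differentiableAt, by simp, e1 ▸ c2⟩
  have c0 : ContDiff ℝ (1 + 1 + 1) f₀ :=
    contDiff_succ_iff_deriv.2 ⟨fun t => (H.d0 t).differentiableAt, by simp, H.deriv_eq ▸ c1⟩
  convert c0 using 1
  norm_num

theorem of_contDiff (h : ContDiff ℝ 3 f₀) :
    DerivChain f₀ (deriv f₀) (iteratedDeriv 2 f₀) (iteratedDeriv 3 f₀) where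
  d0 t := (h.differentiable (by norm_num) t).hasDerivAt
  d1 t := by
    have := (h.differentiable_iteratedDeriv 1 (by norm_num) t).hasDerivAt
    rwa [← iteratedDeriv_succ, iteratedDeriv_one] at this
  d2 t := by
    have := (h.differentiable_iteratedDeriv 2 (by norm_num) t).hasDerivAt
    rwa [← iteratedDeriv_succ] at this
  cont := h.continuous_iteratedDeriv 3 (by norm_num)

theorem add_const_mul (H : DerivChain f₀ f₁ f₂ f₃) (K : DerivChain g₀ g₁ g₂ g₃) (c : ℝ) :
    DerivChain (fun t => f₀ t + c * g₀ t) (fun t => f₁ t + c * g₁ t)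
      (fun t => f₂ t + c * g₂ t) (fun t => f₃ t + c * g₃ t) where
  d0 t := (H.d0 t).add ((K.d0 t).const_mul c)
  d1 t := (H.d1 t).add ((K.d1 t).const_mul c)
  d2 t := (H.d2 t).add ((K.d2 t).const_mul c)
  cont := H.cont.add (K.cont.const_mul c)

end DerivChain

theorem hasDerivAt_primitive {f : ℝ → ℝ} (hf : Continuous f) (t : ℝ) :
    HasDerivAt (fun u => ∫ s in (0 : ℝ)..u, f s) (f t) t :=
  intervalIntegral.integral_hasDerivAt_right (hf.intervalIntegrable _ _)
    (hf.stronglyMeasurableAtFilter _ _) hf.continuousAt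

theorem continuous_primitive_zero {f : ℝ → ℝ} (hf : Continuous f) :
    Continuous fun u => ∫ s in (0 : ℝ)..u, f s :=
  continuous_iff_continuousAt.2 fun t => (hasDerivAt_primitive hf t).continuousAt

/-- A quadratic can be subtracted from any continuous `G` so that the difference is the third
derivative of a function vanishing to second order at both ends of `[0, T]`. -/
theorem exists_variation {G : ℝ → ℝ} (hG : Continuous G) {T : ℝ} (hT : 0 < T) :
    ∃ a b c : ℝ, ∃ η η₁ η₂ : ℝ → ℝ,
      DerivChain η η₁ η₂ (fun t => G t - (a + b * t + c * t ^ 2)) ∧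
      η 0 = 0 ∧ η₁ 0 = 0 ∧ η₂ 0 = 0 ∧ η T = 0 ∧ η₁ T = 0 ∧ η₂ T = 0 := by
  set P : (ℝ → ℝ) → ℝ → ℝ := fun f u => ∫ s in (0 : ℝ)..u, f s with hP
  have hP0 (f : ℝ → ℝ) : P f 0 = 0 := by simp [hP]
  have c1 : Continuous (P G) := continuous_primitive_zero hG
  have c2 : Continuous (P (P G)) := continuous_primitive_zero c1
  have d2 : ∀ t, HasDerivAt (P G) (G t) t := hasDerivAt_primitive hG
  have d1 : ∀ t, HasDerivAt (P (P G)) (P G t) t := hasDerivAt_primitive c1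
  have d0 : ∀ t, HasDerivAt (P (P (P G))) (P (P G) t) t := hasDerivAt_primitive c2
  have hT0 : T ≠ 0 := hT.ne'
  -- The end conditions at `T` form a linear system in `a, b, c`; its solution is written out below.
  obtain ⟨a, b, c, e2, e1, e0⟩ : ∃ a b c : ℝ,
      P G T = a * T + b * T ^ 2 / 2 + c * T ^ 3 / 3 ∧
      P (P G) T = a * T ^ 2 / 2 + b * T ^ 3 / 6 + c * T ^ 4 / 12 ∧
      P (P (P G)) T = a * T ^ 3 / 6 + b * T ^ 4 / 24 + c * T ^ 5 / 60 := by
    generalize P G T = X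
    generalize P (P G) T = Y
    generalize P (P (P G)) T = Z
    refine ⟨3 * X / T - 24 * Y / T ^ 2 + 60 * Z / T ^ 3,
      -24 * X / T ^ 2 + 168 * Y / T ^ 3 - 360 * Z / T ^ 4,
      30 * X / T ^ 3 - 180 * Y / T ^ 4 + 360 * Z / T ^ 5, ?_, ?_, ?_⟩ <;>
      (field_simp; ring)
  refine ⟨a, b, c,
    fun t => P (P (P G)) t - (a * t ^ 3 / 6 + b * t ^ 4 / 24 + c * t ^ 5 / 60),
    fun t => P (P G) t - (a * t ^ 2 / 2 + b * t ^ 3 / 6 + c * t ^ 4 / 12),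
    fun t => P G t - (a * t + b * t ^ 2 / 2 + c * t ^ 3 / 3), ⟨?_, ?_, ?_, by fun_prop⟩,
    by simp [hP0], by simp [hP0], by simp [hP0], by simp [e0], by simp [e1], by simp [e2]⟩
  · intro t
    refine (d0 t).sub ?_
    refine HasDerivAt.congr_deriv (((((hasDerivAt_pow 3 t).const_mul a).div_const 6).add
      (((hasDerivAt_pow 4 t).const_mul b).div_const 24)).add
      (((hasDerivAt_pow 5 t).const_mul c).div_const 60)) ?_
    norm_num
    ring
  · intro t
    refine (d1 t).sub ?_
    refine HasDerivAt.congr_deriv (((((hasDerivAt_pow 2 t).const_mul a).div_const 2).add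
      (((hasDerivAt_pow 3 t).const_mul b).div_const 6)).add
      (((hasDerivAt_pow 4 t).const_mul c).div_const 12)) ?_
    norm_num
    ring
  · intro t
    refine (d2 t).sub ?_
    refine HasDerivAt.congr_deriv ((((hasDerivAt_id' t).const_mul a).add
      (((hasDerivAt_pow 2 t).const_mul b).div_const 2)).add
      (((hasDerivAt_pow 3 t).const_mul c).div_const 3)) ?_
    norm_num
    ring

/-- Third derivatives of functions vanishing to second order at both ends are orthogonal to
quadratics. -/
theorem integral_quadratic_mul_eq_zero {η η₁ η₂ h : ℝ → ℝ} (H : DerivChain η η₁ η₂ h) {T : ℝ}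
    (h0 : η 0 = 0) (h1 : η₁ 0 = 0) (h2 : η₂ 0 = 0)
    (k0 : η T = 0) (k1 : η₁ T = 0) (k2 : η₂ T = 0) (a b c : ℝ) :
    ∫ t in (0 : ℝ)..T, (a + b * t + c * t ^ 2) * h t = 0 := by
  have hc := H.cont
  -- With `q = a + b t + c t ^ 2`, a primitive of `q η'''` is `q η'' - q' η' + q'' η`.
  rw [intervalIntegral.integral_eq_sub_of_hasDerivAt
    (f := fun t => (a + b * t + c * t ^ 2) * η₂ t - (b + 2 * c * t) * η₁ t + 2 * c * η t)]
  · simp [h0, h1, h2, k0, k1, k2]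
  · intro t _
    have hq : HasDerivAt (fun t : ℝ => a + b * t + c * t ^ 2) (b + 2 * c * t) t := by
      refine HasDerivAt.congr_deriv ((((hasDerivAt_id' t).const_mul b).const_add a).add
        ((hasDerivAt_pow 2 t).const_mul c)) ?_
      norm_num
      ring
    have hq' : HasDerivAt (fun t : ℝ => b + 2 * c * t) (2 * c) t := by
      refine HasDerivAt.congr_deriv (((hasDerivAt_id' t).const_mul (2 * c)).const_add b) ?_
      ring
    refine HasDerivAt.congr_deriv (((hq.mul (H.d2 t)).sub (hq'.mul (H.d1 t))).add
      ((H.d0 t).const_mul (2 * c))) ?_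
    ring
  · exact Continuous.intervalIntegrable (by fun_prop) _ _

theorem eq_zero_of_forall_quadratic_nonneg {A B : ℝ} (hB : 0 ≤ B)
    (h : ∀ ε : ℝ, 0 ≤ ε * A + ε ^ 2 * B) : A = 0 := by
  have hD : 0 < B + 1 := by linarith
  have e : -A / (B + 1) * A + (-A / (B + 1)) ^ 2 * B = -(A / (B + 1)) ^ 2 := by
    field_simp
    ring
  have h' := h (-A / (B + 1))
  rw [e] at h'
  have h0 : A / (B + 1) = 0 := by
    apply pow_eq_zero_iff (two_ne_zero) |>.1
    linarith [sq_nonneg (A / (B + 1))]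
  simpa [hD.ne'] using h0


/-- Necessity direction of the paper's Theorem 1: a minimizer `x*` of the
time-weighted jerk cost among `C³` trajectories with the same boundary position,
velocity, and acceleration at `t = 0` and `t = t_f` has a weighted jerk
`w(t) · x*'''(t)` equal to a quadratic polynomial on `[0, t_f]`. -/
theorem time_weighted_jerk_minimizer_necessity
    (wt tf : ℝ) (hwt : 1 ≤ wt) (htf : 0 < tf)
    (w : ℝ → ℝ) (hw : ∀ t, w t = (wt - 1) / (1 + t) + 1)
    (xs : ℝ → ℝ) (hxs : ContDiff ℝ 3 xs)
    (hmin : ∀ x : ℝ → ℝ, ContDiff ℝ 3 x →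
      x 0 = xs 0 → deriv x 0 = deriv xs 0 →
      iteratedDeriv 2 x 0 = iteratedDeriv 2 xs 0 →
      x tf = xs tf → deriv x tf = deriv xs tf →
      iteratedDeriv 2 x tf = iteratedDeriv 2 xs tf →
      ∫ t in (0 : ℝ)..tf, (1 / 2) * w t * (iteratedDeriv 3 xs t) ^ 2 ≤
        ∫ t in (0 : ℝ)..tf, (1 / 2) * w t * (iteratedDeriv 3 x t) ^ 2) :
    ∃ c1 c2 c3 : ℝ, ∀ t ∈ Set.Icc (0 : ℝ) tf,
      w t * iteratedDeriv 3 xs t = (1 / 2) * c1 * t ^ 2 - c2 * t + c3 := by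
  -- `w` has a pole at `-1`, outside `[0, tf]`; `W` is a positive continuous weight on all of `ℝ`
  -- which agrees with `w` where it matters, so that the variation below is globally `C³`.
  set W : ℝ → ℝ := fun t => (wt - 1) / (1 + |t|) + 1 with hW
  have hWc : Continuous W := by
    refine (continuous_const.div (by fun_prop) fun t => ?_).add continuous_const
    positivity
  have hWpos : ∀ t, 0 ≤ W t := fun t =>
    add_nonneg (div_nonneg (by linarith) (by positivity)) zero_le_one
  have hwW : ∀ t, 0 ≤ t → w t = W t := fun t ht => by rw [hw, hW]; simp [abs_of_nonneg ht]
  have X := DerivChain.of_contDiff hxs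
  set j := iteratedDeriv 3 xs with hj
  have hjc : Continuous j := X.cont
  obtain ⟨a, b, c, η, η₁, η₂, E, h0, h1, h2, k0, k1, k2⟩ :=
    exists_variation (G := fun t => W t * j t) (by fun_prop) htf
  have hq0 := integral_quadratic_mul_eq_zero E h0 h1 h2 k0 k1 k2 a b c
  set h : ℝ → ℝ := fun t => W t * j t - (a + b * t + c * t ^ 2) with hh
  have hhc : Continuous h := E.cont
  have toW (f : ℝ → ℝ) : ∫ t in (0 : ℝ)..tf, (1 / 2) * w t * f t ^ 2 =
      ∫ t in (0 : ℝ)..tf, (1 / 2) * W t * f t ^ 2 := by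
    refine intervalIntegral.integral_congr fun t ht => ?_
    rw [Set.uIcc_of_le htf.le] at ht
    simp only [hwW t ht.1]
  have hvar : ∫ t in (0 : ℝ)..tf, W t * j t * h t = 0 := by
    refine eq_zero_of_forall_quadratic_nonneg
      (B := ∫ t in (0 : ℝ)..tf, (1 / 2) * W t * h t ^ 2)
      (intervalIntegral.integral_nonneg htf.le fun t _ =>
        mul_nonneg (mul_nonneg (by norm_num) (hWpos t)) (sq_nonneg _)) fun ε => ?_
    have C := X.add_const_mul E ε
    have key := hmin _ C.contDiff (by simp [h0]) (by rw [C.deriv_eq]; simp [h1])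
      (by rw [C.iteratedDeriv_two]; simp [h2]) (by simp [k0]) (by rw [C.deriv_eq]; simp [k1])
      (by rw [C.iteratedDeriv_two]; simp [k2])
    rw [C.iteratedDeriv_three, toW, toW] at key
    have expand : ∫ t in (0 : ℝ)..tf, (1 / 2) * W t * (j t + ε * h t) ^ 2 =
        (∫ t in (0 : ℝ)..tf, (1 / 2) * W t * j t ^ 2) +
          (ε * (∫ t in (0 : ℝ)..tf, W t * j t * h t) +
            ε ^ 2 * ∫ t in (0 : ℝ)..tf, (1 / 2) * W t * h t ^ 2) := by
      rw [← intervalIntegral.integral_const_mul, ← intervalIntegral.integral_const_mul,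
        ← intervalIntegral.integral_add, ← intervalIntegral.integral_add]
      · refine intervalIntegral.integral_congr fun t _ => ?_
        ring
      all_goals exact Continuous.intervalIntegrable (by fun_prop) _ _
    linarith [key.trans_eq expand]
  have hsq : ∫ t in (0 : ℝ)..tf, h t ^ 2 = 0 := by
    have : ∫ t in (0 : ℝ)..tf, h t ^ 2 = (∫ t in (0 : ℝ)..tf, W t * j t * h t) -
        ∫ t in (0 : ℝ)..tf, (a + b * t + c * t ^ 2) * h t := by
      rw [← intervalIntegral.integral_sub]
      · refine intervalIntegral.integral_congr fun t _ => ?_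
        simp only [hh]
        ring
      all_goals exact Continuous.intervalIntegrable (by fun_prop) _ _
    rw [this, hvar, hq0, sub_zero]
  refine ⟨2 * c, -b, a, fun t ht => ?_⟩
  have ht0 : h t = 0 := by
    by_contra hne
    exact (intervalIntegral.integral_pos htf (hhc.pow 2).continuousOn
      (fun s _ => sq_nonneg (h s)) ⟨t, ht, sq_pos_of_ne_zero hne⟩).ne' hsq
  rw [hwW t ht.1]
  simp only [hh] at ht0
  linarith
end

section
/- Let $t_f > 0$ and let $x^* : \mathbb{R} \to \mathbb{R}$ be a polynomial function of degree at most $5$. Then for every three times continuously differentiable function $x : \mathbb{R} \to \mathbb{R}$ satisfying $x(0) = x^*(0)$, $x'(0) = x^{*'}(0)$, $x''(0) = x^{*''}(0)$, $x(t_f) = x^*(t_f)$, $x'(t_f) = x^{*'}(t_f)$, and $x''(t_f) = x^{*''}(t_f)$, one has $\int_0^{t_f} \tfrac{1}{2} (x^{*'''}(t))^2 dt \le \int_0^{t_f} \tfrac{1}{2} (x'''(t))^2 dt$. -/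
/-!
Write `h = x - p` for the deviation from the polynomial `p`; it vanishes to second order at both
ends of the interval. Convexity of the square gives pointwise
`½ x'''² - ½ p'''² ≥ p''' h'''`, so it is enough that `∫ p''' h''' = 0`, which is the
Euler–Lagrange condition `p⁽⁶⁾ = 0` in integrated form: the function
`p''' h'' - p⁗ h' + p⁽⁵⁾ h` has derivative `p''' h''' + p⁽⁶⁾ h = p''' h'''` and vanishes at both
endpoints.
-/

/-- Iterated derivatives of a polynomial function agree with its formal derivatives. -/
lemma iteratedDeriv_eval_eq (p : Polynomial ℝ) (k : ℕ) :
    iteratedDeriv k (fun t => p.eval t) = fun t => (Polynomial.derivative^[k] p).eval t := by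
  induction k with
  | zero => simp
  | succ k ih =>
    rw [iteratedDeriv_succ, ih, Function.iterate_succ_apply']
    ext t
    exact Polynomial.deriv _

lemma hasDerivAt_eval_iterate (p : Polynomial ℝ) (k : ℕ) (t : ℝ) :
    HasDerivAt (fun t => (Polynomial.derivative^[k] p).eval t)
      ((Polynomial.derivative^[k + 1] p).eval t) t := by
  rw [Function.iterate_succ_apply']
  exact Polynomial.hasDerivAt _ t

lemma hasDerivAt_iteratedDeriv_of_lt {x : ℝ → ℝ} (hx : ContDiff ℝ 3 x) (k : ℕ) (hk : k < 3)
    (t : ℝ) : HasDerivAt (iteratedDeriv k x) (iteratedDeriv (k + 1) x t) t := by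
  rw [iteratedDeriv_succ]
  exact (hx.differentiable_iteratedDeriv k (by exact_mod_cast hk) t).hasDerivAt



/-- Jerk-optimality of quintic polynomial trajectories (case `w_t = 1`, following
Werling et al.): a polynomial of degree at most 5 minimizes the unweighted jerk cost
`∫₀^{t_f} (1/2) (x'''(t))² dt` among all `C³` trajectories with the same boundary
position, velocity, and acceleration at `t = 0` and `t = t_f`. -/
theorem quintic_jerk_optimality
    (tf : ℝ) (htf : 0 < tf)
    (p : Polynomial ℝ) (hp : p.degree ≤ 5)
    (xs : ℝ → ℝ) (hxs : xs = fun t => p.eval t)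
    (x : ℝ → ℝ) (hx : ContDiff ℝ 3 x)
    (h0 : x 0 = xs 0) (h0' : deriv x 0 = deriv xs 0)
    (h0'' : iteratedDeriv 2 x 0 = iteratedDeriv 2 xs 0)
    (hf : x tf = xs tf) (hf' : deriv x tf = deriv xs tf)
    (hf'' : iteratedDeriv 2 x tf = iteratedDeriv 2 xs tf) :
    ∫ t in (0 : ℝ)..tf, (1 / 2) * (iteratedDeriv 3 xs t) ^ 2 ≤
      ∫ t in (0 : ℝ)..tf, (1 / 2) * (iteratedDeriv 3 x t) ^ 2 := by
  subst hxs
  have hp6 : Polynomial.derivative^[6] p = 0 :=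
    Polynomial.iterate_derivative_eq_zero_of_degree_lt (lt_of_le_of_lt hp (by norm_num))
  rw [← iteratedDeriv_one, ← iteratedDeriv_one] at h0' hf'
  rw [iteratedDeriv_eval_eq] at h0' h0'' hf' hf'' ⊢
  have P := hasDerivAt_eval_iterate p
  have X := hasDerivAt_iteratedDeriv_of_lt hx
  set q : ℕ → ℝ → ℝ := fun k t => (Polynomial.derivative^[k] p).eval t with hq
  change ∀ k t, HasDerivAt (q k) (q (k + 1) t) t at P
  change iteratedDeriv 1 x 0 = q 1 0 at h0'
  change iteratedDeriv 2 x 0 = q 2 0 at h0''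
  change iteratedDeriv 1 x tf = q 1 tf at hf'
  change iteratedDeriv 2 x tf = q 2 tf at hf''
  have h0q : iteratedDeriv 0 x 0 = q 0 0 := by simpa [hq] using h0
  have hfq : iteratedDeriv 0 x tf = q 0 tf := by simpa [hq] using hf
  have hq6 : ∀ t, q 6 t = 0 := fun t => by simp only [hq, hp6, Polynomial.eval_zero]
  change ∫ t in (0 : ℝ)..tf, (1 / 2) * (q 3 t) ^ 2 ≤ _
  have cq : Continuous (q 3) := (Polynomial.derivative^[3] p).continuous
  have cx : Continuous (iteratedDeriv 3 x) := hx.continuous_iteratedDeriv 3 (by norm_num)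
  have key : ∫ t in (0 : ℝ)..tf, q 3 t * (iteratedDeriv 3 x t - q 3 t) = 0 := by
    rw [intervalIntegral.integral_eq_sub_of_hasDerivAt
      (f := fun t => q 3 t * (iteratedDeriv 2 x t - q 2 t)
        - q 4 t * (iteratedDeriv 1 x t - q 1 t) + q 5 t * (iteratedDeriv 0 x t - q 0 t))]
    · simp only [h0q, h0', h0'', hfq, hf', hf'']
      ring
    · intro t _
      have D := (((P 3 t).fun_mul ((X 2 (by norm_num) t).fun_sub (P 2 t))).fun_sub
        ((P 4 t).fun_mul ((X 1 (by norm_num) t).fun_sub (P 1 t)))).fun_add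
        ((P 5 t).fun_mul ((X 0 (by norm_num) t).fun_sub (P 0 t)))
      refine D.congr_deriv ?_
      simp only [Nat.reduceAdd, hq6]
      ring
    · exact (cq.mul (cx.sub cq)).intervalIntegrable _ _
  have mono : ∫ t in (0 : ℝ)..tf, q 3 t * (iteratedDeriv 3 x t - q 3 t) ≤
      ∫ t in (0 : ℝ)..tf, ((1 / 2) * (iteratedDeriv 3 x t) ^ 2 - (1 / 2) * (q 3 t) ^ 2) := by
    refine intervalIntegral.integral_mono_on htf.le
      (Continuous.intervalIntegrable (by fun_prop) _ _)
      (Continuous.intervalIntegrable (by fun_prop) _ _) fun t _ => ?_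
    nlinarith [sq_nonneg (iteratedDeriv 3 x t - q 3 t)]
  rw [key, intervalIntegral.integral_sub (Continuous.intervalIntegrable (by fun_prop) _ _)
    (Continuous.intervalIntegrable (by fun_prop) _ _)] at mono
  linarith
end
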